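/- arXiv:1708.03010 — 2 statements merged into one kernel-verified Lean document; each statement's English description precedes it below -/
import Mathlib

section
/- Let K be a field of characteristic zero, and let S be a smooth K-algebra, essentially of finite type over K. Let I ⊆ S be a radical ideal and f ∈ I. Then the following are equivalent: (1) ∂(f) ∈ I for every K-linear derivation ∂ : S → S; (2) f ∈ I^{(2)}; (3) f^n ∈ I^{n+1} for some positive integer n. -/
universe u

/-- The `n`-th symbolic power of an ideal `I`:
`I^{(n)} = ⋂_{𝔭 ∈ Min(I)} (I^n R_𝔭 ∩ R)`, the intersection over the minimal primes `𝔭`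
of `I` of the preimages in `R` of `I^n R_𝔭` under the localization maps. -/
noncomputable def symbolicPower {R : Type*} [CommRing R] (I : Ideal R) (n : ℕ) : Ideal R :=
  ⨅ (P : Ideal R) (hP : P ∈ I.minimalPrimes),
    haveI : P.IsPrime := hP.1.1
    (Ideal.map (algebraMap R (Localization.AtPrime P)) (I ^ n)).comap
      (algebraMap R (Localization.AtPrime P))

/-!
Since `Ω[S⁄K]` is projective, condition (1) says that `df ∈ I Ω[S⁄K]`, hence that every derivation
from `S` into an algebra `A` over `S` maps `f` into `IA`.

(1) → (2): at a minimal prime `P` of `I` the maximal ideal `𝔪` of `S_P` is `I S_P`, and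
`𝔪 / 𝔪² → κ ⊗ Ω` is injective because the residue field `κ` is formally smooth over `K`.

(3) → (1): differentiating `f ^ n ∈ I ^ (n + 1)` `n` times gives `n! (D f) ^ n ∈ I`.

(1) → (3): if no `f ^ n` lies in `I ^ (n + 1)`, then `f` is a nonunit in the chart `S[I / f]` of the
blowup of `I`. Hence some discrete valuation ring `V` that is essentially of finite type over `K`
receives a map from `S` with `IV = fV`, where `f` is neither zero nor a unit in `V`. Such a `V` is
flat and unramified over `K[τ]`, where `τ` is a uniformizer, so it is formally smooth over `K` and
has a derivation with `D τ` a unit. In characteristic zero `D f ∉ fV`, contradicting (1).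
-/

section Derivation

open KaehlerDifferential TensorProduct

theorem mem_smul_top_of_forall_dual_mem {R M : Type*} [CommRing R] [AddCommGroup M] [Module R M]
    [Module.Projective R M] {I : Ideal R} {x : M} (h : ∀ φ : M →ₗ[R] R, φ x ∈ I) :
    x ∈ I • (⊤ : Submodule R M) := by
  obtain ⟨s, hs⟩ := Module.projective_def.1 ‹Module.Projective R M›
  rw [← hs x, Finsupp.linearCombination_apply]
  exact Submodule.sum_mem _ fun i _ ↦
    Submodule.smul_mem_smul (h (Finsupp.lapply i ∘ₗ s)) Submodule.mem_top

variable {K S A M : Type*} [CommRing K] [CommRing S] [Algebra K S] [CommRing A] [Algebra K A]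

theorem universalDerivation_mem_smul_top [Module.Projective S Ω[S⁄K]] {I : Ideal S} {f : S}
    (h : ∀ D : Derivation K S S, D f ∈ I) : D K S f ∈ I • (⊤ : Submodule S Ω[S⁄K]) :=
  mem_smul_top_of_forall_dual_mem fun φ ↦ h (φ.compDer (D K S))

theorem derivation_mem_smul_top [AddCommGroup M] [Module S M] [Module K M] [IsScalarTower K S M]
    [Module.Projective S Ω[S⁄K]] {I : Ideal S} {f : S}
    (h : ∀ D : Derivation K S S, D f ∈ I) (δ : Derivation K S M) :
    δ f ∈ I • (⊤ : Submodule S M) := by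
  rw [← Derivation.liftKaehlerDifferential_comp_D δ f]
  exact Submodule.smul_mono le_rfl le_top <| Submodule.map_smul'' I ⊤ δ.liftKaehlerDifferential ▸
    Submodule.mem_map_of_mem (universalDerivation_mem_smul_top h)

theorem derivation_algebraMap_mem_map_smul_top [AddCommGroup M] [Module A M] [Module K M]
    [IsScalarTower K A M] [Algebra S A] [IsScalarTower K S A] [Module.Projective S Ω[S⁄K]]
    {I : Ideal S} {f : S} (h : ∀ D : Derivation K S S, D f ∈ I) (δ : Derivation K A M) :
    δ (algebraMap S A f) ∈ I.map (algebraMap S A) • (⊤ : Submodule A M) := by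
  let := Module.compHom M (algebraMap S A)
  have : IsScalarTower S A M := .of_compHom S A M
  have : IsScalarTower K S M := .to₁₂₄ K S A M
  rw [← Submodule.restrictScalars_mem S, Ideal.smul_restrictScalars]
  exact derivation_mem_smul_top h (δ.compAlgebraMap S)

theorem derivation_mem_pow (D : Derivation K S S) {I : Ideal S} {n : ℕ} {x : S}
    (hx : x ∈ I ^ (n + 1)) : D x ∈ I ^ n := by
  induction n generalizing x with
  | zero => simp
  | succ n ih =>
    rw [pow_succ] at hx
    induction hx using Submodule.mul_induction_on' with
    | mem_mul_mem a ha b hb =>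
      rw [D.leibniz, smul_eq_mul, smul_eq_mul]
      refine add_mem (Ideal.mul_mem_right _ _ ha) ?_
      rw [pow_succ']
      exact Ideal.mul_mem_mul hb (ih ha)
    | add a _ b _ hDa hDb => rw [map_add]; exact add_mem hDa hDb

theorem mul_derivation_mul_pow_mem [Algebra ℚ S] (D : Derivation K S S) {I : Ideal S} {f u : S}
    (hf : f ∈ I) {n : ℕ} (h : u * f ^ (n + 1) ∈ I ^ (n + 2)) : u * D f * f ^ n ∈ I ^ (n + 1) := by
  have hD := derivation_mem_pow D h
  have hleib : D (u * f ^ (n + 1)) = (n + 1 : ℚ) • (u * D f * f ^ n) + f ^ (n + 1) * D u := by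
    simp only [D.leibniz, D.leibniz_pow, Nat.add_sub_cancel, smul_eq_mul, Algebra.smul_def,
      eq_natCast, map_add, map_natCast, map_one]
    ring
  rw [hleib, Ideal.add_mem_iff_left _ (Ideal.mul_mem_right _ _ (Ideal.pow_mem_pow hf _))] at hD
  have := ((I ^ (n + 1)).restrictScalars ℚ).smul_mem (n + 1 : ℚ)⁻¹ hD
  rwa [inv_smul_smul₀ (by positivity)] at this

-- The induction feeds the factors `D f` produced by the first differentiations into `u`.
theorem mul_derivation_pow_mem [Algebra ℚ S] (D : Derivation K S S) {I : Ideal S} {f u : S}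
    (hf : f ∈ I) {n : ℕ} (h : u * f ^ n ∈ I ^ (n + 1)) : u * D f ^ n ∈ I := by
  induction n generalizing u with
  | zero => simpa using h
  | succ n ih =>
    rw [pow_succ', ← mul_assoc]
    exact ih (mul_derivation_mul_pow_mem D hf h)

theorem derivation_mem_of_pow_mem [Algebra ℚ S] (D : Derivation K S S) {I : Ideal S}
    (hI : I.IsRadical) {f : S} (hf : f ∈ I) {n : ℕ} (h : f ^ n ∈ I ^ (n + 1)) : D f ∈ I :=
  hI ⟨n, by simpa using mul_derivation_pow_mem D hf (u := 1) (by simpa using h)⟩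

theorem one_tmul_eq_zero_of_mem_smul_top [AddCommGroup M] [Module A M] {J : Ideal A} {m : M}
    (h : m ∈ J • (⊤ : Submodule A M)) :
    (1 : A ⧸ J) ⊗ₜ[A] m = 0 := by
  suffices J • (⊤ : Submodule A M) ≤ LinearMap.ker (TensorProduct.mk A (A ⧸ J) M 1) from this h
  rw [Submodule.smul_le]
  intro a ha n _
  rw [LinearMap.mem_ker, map_smul, TensorProduct.mk_apply, TensorProduct.smul_tmul',
    Algebra.smul_def, Ideal.Quotient.algebraMap_eq, Ideal.Quotient.eq_zero_iff_mem.2 ha, zero_mul,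
    zero_tmul]

theorem mem_sq_of_D_mem_smul_top [Algebra.FormallySmooth K A] {J : Ideal A}
    [Algebra.FormallySmooth K (A ⧸ J)] {x : A} (hx : x ∈ J)
    (h : D K A x ∈ J • (⊤ : Submodule A Ω[A⁄K])) : x ∈ J ^ 2 := by
  have hinj := (Algebra.FormallySmooth.kerCotangentToTensor_injective_iff (R := K) (P := A)
    (A := A ⧸ J) Ideal.Quotient.mk_surjective).2 inferInstance
  have hker : RingHom.ker (algebraMap A (A ⧸ J)) = J := Ideal.mk_ker
  have hcot : Ideal.toCotangent _ ⟨x, hker.ge hx⟩ = 0 :=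
    hinj <| by rw [kerCotangentToTensor_toCotangent, map_zero, one_tmul_eq_zero_of_mem_smul_top h]
  simpa only [Ideal.toCotangent_eq_zero, hker] using hcot

theorem mem_sq_of_forall_derivation_mem [Algebra.FormallySmooth K A] {J : Ideal A}
    [Algebra.FormallySmooth K (A ⧸ J)] {x : A} (hx : x ∈ J)
    (h : ∀ D : Derivation K A A, D x ∈ J) : x ∈ J ^ 2 :=
  mem_sq_of_D_mem_smul_top hx (universalDerivation_mem_smul_top h)

end Derivation

section FormallySmooth

open IsLocalRing Polynomial TensorProduct

theorem formallySmooth_field_of_charZero (K L : Type*) [Field K] [CharZero K] [Field L]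
    [Algebra K L] : Algebra.FormallySmooth K L := by
  obtain ⟨s, hs⟩ := exists_isTranscendenceBasis K L
  have : Algebra.IsAlgebraic (IntermediateField.adjoin K (Set.range ((↑) : s → L))) L :=
    hs.isAlgebraic_field
  exact .of_algebraicIndependent_of_isSeparable hs.1

theorem formallySmooth_of_map_maximalIdeal_eq (R S : Type*) [CommRing R] [CommRing S] [Algebra R S]
    [IsLocalRing R] [IsNoetherianRing R] [IsLocalRing S] [IsLocalHom (algebraMap R S)]
    [Module.Flat R S] [Algebra.EssFiniteType R S]
    [Algebra.FormallySmooth (ResidueField R) (ResidueField S)]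
    (h : (maximalIdeal R).map (algebraMap R S) = maximalIdeal S) :
    Algebra.FormallySmooth R S := by
  let e : ResidueField S ≃+* ResidueField R ⊗[R] S :=
    (Ideal.quotEquivOfEq h.symm).trans
      (Algebra.TensorProduct.quotIdealMapEquivQuotTensor S (maximalIdeal R)).toRingEquiv
  have : Algebra.FormallySmooth (ResidueField R) (ResidueField R ⊗[R] S) :=
    .of_equiv (.ofRingEquiv (f := e) fun x ↦ by
      obtain ⟨r, rfl⟩ := residue_surjective x
      exact (Algebra.TensorProduct.quotIdealMapEquivQuotTensor S (maximalIdeal R)).commutes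
        (residue R r))
  have : Algebra.FinitePresentation R (Algebra.EssFiniteType.subalgebra R S) :=
    Algebra.FinitePresentation.of_finiteType.1 inferInstance
  exact .of_formallySmooth_residueField_tensor (P := Algebra.EssFiniteType.subalgebra R S)
    (Algebra.EssFiniteType.submonoid R S)

theorem formallySmooth_of_map_under_maximalIdeal_eq (A V : Type*) [CommRing A] [CommRing V]
    [Algebra A V] [Algebra ℚ A] [IsNoetherianRing A] [IsLocalRing V] [Module.Flat A V]
    [Algebra.EssFiniteType A V]
    (h : ((maximalIdeal V).under A).map (algebraMap A V) = maximalIdeal V) :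
    Algebra.FormallySmooth A V := by
  let q : Ideal A := (maximalIdeal V).under A
  let R := Localization.AtPrime q
  let g : R →ₐ[A] V := IsLocalization.liftAlgHom (M := q.primeCompl) (f := Algebra.ofId _ _)
    fun y ↦ not_not.1 y.2
  algebraize [g.toRingHom]
  have hmap : (maximalIdeal R).map (algebraMap R V) = maximalIdeal V := by
    rw [← Localization.AtPrime.map_eq_maximalIdeal, Ideal.map_map, ← IsScalarTower.algebraMap_eq]
    exact h
  have : IsLocalHom (algebraMap R V) := ((local_hom_TFAE (algebraMap R V)).out 2 0).1 hmap.le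
  have : Module.Flat R V := (Module.flat_iff_of_isLocalization R q.primeCompl V).2 inferInstance
  have : Algebra.EssFiniteType R V := .of_comp A R V
  have : CharZero (ResidueField R) :=
    charZero_of_injective_algebraMap (algebraMap ℚ (ResidueField R)).injective
  have := formallySmooth_field_of_charZero (ResidueField R) (ResidueField V)
  have : Algebra.FormallySmooth R V := formallySmooth_of_map_maximalIdeal_eq R V hmap
  have : Algebra.FormallySmooth A R := .of_isLocalization q.primeCompl
  exact .comp A R V

theorem formallySmooth_of_isDVR (K V : Type*) [Field K] [CharZero K] [CommRing V] [IsDomain V]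
    [IsDiscreteValuationRing V] [Algebra K V] [Algebra.EssFiniteType K V] :
    Algebra.FormallySmooth K V := by
  obtain ⟨τ, hτ⟩ := IsDiscreteValuationRing.exists_irreducible V
  have hinj : Function.Injective (aeval τ : K[X] →ₐ[K] V) :=
    transcendental_iff_injective.1 fun h ↦ hτ.not_isUnit (h.isIntegral.isUnit hτ.ne_zero)
  algebraize [(aeval τ : K[X] →ₐ[K] V).toRingHom]
  have hX : algebraMap K[X] V X = τ := aeval_X τ
  have : FaithfulSMul K[X] V := (faithfulSMul_iff_algebraMap_injective _ _).2 hinj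
  have : Algebra.EssFiniteType K[X] V := .of_comp K K[X] V
  have : Algebra.FormallySmooth K[X] V := by
    refine formallySmooth_of_map_under_maximalIdeal_eq K[X] V (le_antisymm Ideal.map_comap_le ?_)
    conv_lhs => rw [hτ.maximalIdeal_eq, ← hX, ← Set.image_singleton, ← Ideal.map_span]
    refine Ideal.map_mono ((Ideal.span_singleton_le_iff_mem _).2 ?_)
    rw [Ideal.mem_comap, hX]
    exact hτ.not_isUnit
  exact .comp K K[X] V

end FormallySmooth

section SymbolicPower

open IsLocalRing

theorem map_localizationAtPrime_eq_maximalIdeal {S : Type*} [CommRing S] {I : Ideal S}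
    (hI : I.IsRadical) {P : Ideal S} [P.IsPrime] (hP : P ∈ I.minimalPrimes) :
    I.map (algebraMap S (Localization.AtPrime P)) = maximalIdeal (Localization.AtPrime P) := by
  rw [← Localization.AtPrime.map_eq_maximalIdeal,
    ← IsLocalization.AtPrime.radical_map_of_mem_minimalPrimes _ P I hP,
    ← IsLocalization.map_radical P.primeCompl, hI.radical]

theorem mem_symbolicPower_iff_exists {R : Type*} [CommRing R] {I : Ideal R} {n : ℕ} {x : R} :
    x ∈ symbolicPower I n ↔ ∀ P ∈ I.minimalPrimes, ∃ s ∉ P, s * x ∈ I ^ n := by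
  simp only [symbolicPower, Ideal.mem_iInf, Ideal.mem_comap]
  refine forall₂_congr fun P hP ↦ ?_
  have : P.IsPrime := hP.1.1
  rw [IsLocalization.algebraMap_mem_map_algebraMap_iff P.primeCompl]
  simp [Ideal.primeCompl]

theorem derivation_mem_of_mem_symbolicPower_two {K S : Type*} [CommRing K] [CommRing S]
    [Algebra K S] {I : Ideal S} (hI : I.IsRadical) {f : S} (hf : f ∈ I)
    (h : f ∈ symbolicPower I 2) (D : Derivation K S S) : D f ∈ I := by
  rw [← hI.radical, ← Ideal.sInf_minimalPrimes, Submodule.mem_sInf]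
  intro P hP
  obtain ⟨s, hs, hsf⟩ := mem_symbolicPower_iff_exists.1 h P hP
  have hD : s * D f + f * D s ∈ I := by simpa using derivation_mem_pow D hsf
  rw [Ideal.add_mem_iff_left _ (Ideal.mul_mem_right _ _ hf)] at hD
  exact (hP.1.1.mem_or_mem (hP.1.2 hD)).resolve_left hs

theorem mem_symbolicPower_two_of_forall_derivation_mem {K S : Type*} [Field K] [CharZero K]
    [CommRing S] [Algebra K S] [Algebra.FormallySmooth K S]
    {I : Ideal S} (hI : I.IsRadical) {f : S} (hf : f ∈ I)
    (h : ∀ D : Derivation K S S, D f ∈ I) : f ∈ symbolicPower I 2 := by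
  simp only [symbolicPower, Ideal.mem_iInf, Ideal.mem_comap]
  intro P hP
  have : P.IsPrime := hP.1.1
  have hm := map_localizationAtPrime_eq_maximalIdeal hI hP
  have : Algebra.FormallySmooth K
      (Localization.AtPrime P ⧸ maximalIdeal (Localization.AtPrime P)) :=
    formallySmooth_field_of_charZero K (ResidueField (Localization.AtPrime P))
  rw [Ideal.map_pow, hm]
  refine mem_sq_of_D_mem_smul_top (K := K) (hm ▸ Ideal.mem_map_of_mem _ hf) ?_
  rw [← hm]
  exact derivation_algebraMap_mem_map_smul_top h _

end SymbolicPower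

section DiscreteValuationRing

open IsLocalRing

variable (K : Type*) {V : Type*} [Field K] [CharZero K] [CommRing V] [IsDomain V]
  [IsDiscreteValuationRing V] [Algebra K V]

theorem exists_derivation_isUnit_of_irreducible [Algebra.FormallySmooth K V] {τ : V}
    (hτ : Irreducible τ) : ∃ D : Derivation K V V, IsUnit (D τ) := by
  by_contra! h
  have : Algebra.FormallySmooth K (V ⧸ maximalIdeal V) :=
    formallySmooth_field_of_charZero K (ResidueField V)
  have hsq := mem_sq_of_forall_derivation_mem (K := K) (J := maximalIdeal V) hτ.not_isUnit h
  rw [hτ.maximalIdeal_eq, Ideal.span_singleton_pow, Ideal.mem_span_singleton] at hsq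
  exact hτ.not_isUnit <| isUnit_of_dvd_one <|
    (mul_dvd_mul_iff_left hτ.ne_zero).1 (by simpa [sq] using hsq)

theorem exists_derivation_not_dvd [Algebra.FormallySmooth K V] {g : V} (hg : g ≠ 0)
    (hgu : ¬ IsUnit g) :
    ∃ D : Derivation K V V, ¬ g ∣ D g := by
  obtain ⟨τ, hτ⟩ := IsDiscreteValuationRing.exists_irreducible V
  obtain ⟨D, hD⟩ := exists_derivation_isUnit_of_irreducible K hτ
  obtain ⟨n, u, rfl⟩ := IsDiscreteValuationRing.eq_unit_mul_pow_irreducible hg hτ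
  obtain ⟨n, rfl⟩ : ∃ m, n = m + 1 := Nat.exists_eq_succ_of_ne_zero (by rintro rfl; simp at hgu)
  have hn : IsUnit ((n + 1 : ℕ) : V) := by
    rw [← map_natCast (algebraMap K V)]
    exact (Ne.isUnit (Nat.cast_ne_zero.2 n.succ_ne_zero)).map (algebraMap K V)
  refine ⟨D, fun hdvd ↦ hτ.not_isUnit (isUnit_of_dvd_unit ?_ ((hn.mul u.isUnit).mul hD))⟩
  have hleib : D (u * τ ^ (n + 1)) =
      τ ^ n * ((n + 1 : ℕ) * u * D τ) + τ ^ n * τ * D u := by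
    simp only [D.leibniz, D.leibniz_pow, smul_eq_mul, nsmul_eq_mul, Nat.add_sub_cancel]
    ring
  have hpow : τ ^ n * τ ∣ D (u * τ ^ (n + 1)) := by
    rw [← pow_succ]
    exact (dvd_mul_left _ _).trans hdvd
  rw [hleib, dvd_add_left (dvd_mul_right _ _)] at hpow
  exact (mul_dvd_mul_iff_left (pow_ne_zero n hτ.ne_zero)).1 hpow

end DiscreteValuationRing

section IntegralClosure

theorem finite_integralClosure_of_finiteType (K B L : Type*) [Field K] [CharZero K] [CommRing B]
    [IsDomain B] [Algebra K B] [Algebra.FiniteType K B] [Field L] [Algebra B L]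
    [IsFractionRing B L] : Module.Finite B (integralClosure B L) := by
  obtain ⟨n, g, hg, hfin⟩ := exists_finite_inj_algHom_of_fg K B
  let R := MvPolynomial (Fin n) K
  let F := FractionRing R
  algebraize [g.toRingHom, (algebraMap B L).comp g.toRingHom]
  have : Module.Finite R B := hfin
  have : FaithfulSMul R L := (faithfulSMul_iff_algebraMap_injective R L).2
    ((IsFractionRing.injective B L).comp hg)
  have : FaithfulSMul R B := (faithfulSMul_iff_algebraMap_injective R B).2 hg
  let : Algebra F L := FractionRing.liftAlgebra R L
  have : IsScalarTower R F L := FractionRing.isScalarTower_liftAlgebra R L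
  have : CharZero F := charZero_of_injective_algebraMap (IsFractionRing.injective R F)
  have : FiniteDimensional F L := .of_isLocalization R B (nonZeroDivisors R)
  have : Module.Finite R (integralClosure R L) :=
    IsIntegralClosure.finite R F L (integralClosure R L)
  have hle : ((integralClosure B L).restrictScalars R) = integralClosure R L :=
    Subalgebra.ext fun x ↦ ⟨isIntegral_trans (R := R) x, IsIntegral.tower_top⟩
  have : Module.Finite R (integralClosure B L) :=
    Module.Finite.equiv (Subalgebra.equivOfEq _ _ hle.symm).toLinearEquiv
  exact .of_restrictScalars_finite R B _

theorem finite_integralClosure_of_isLocalization {A : Type*} (B L : Type*) [CommRing A]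
    [CommRing B] [CommRing L] [Algebra A B] [Algebra A L] [Algebra B L] [IsScalarTower A B L]
    (M : Submonoid A) [IsLocalization M B] [Module.Finite A (integralClosure A L)] :
    Module.Finite B (integralClosure B L) := by
  obtain ⟨s, hs⟩ : (Subalgebra.toSubmodule (integralClosure A L)).FG := Module.Finite.iff_fg.1 ‹_›
  refine (Module.Finite.iff_fg (N := Subalgebra.toSubmodule (integralClosure B L))).2
    ⟨s, le_antisymm (Submodule.span_le.2 fun x hx ↦ ?_) fun x hx ↦ ?_⟩
  · exact IsIntegral.tower_top (R := A) (hs.le (Submodule.subset_span hx))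
  · obtain ⟨m, hm⟩ := IsIntegral.exists_multiple_integral_of_isLocalization M x hx
    obtain ⟨u, hu⟩ := IsLocalization.map_units B m
    have hmx : (u : B) • x ∈ Submodule.span B (s : Set L) := by
      rw [hu, algebraMap_smul]
      exact Submodule.span_le_restrictScalars A B _ (hs.ge hm)
    rwa [Submodule.smul_mem_iff_of_isUnit _ u.isUnit] at hmx

theorem isFractionRing_of_isLocalization_of_injective {A : Type*} (B L : Type*) [CommRing A]
    [CommRing B] [Field L] [Algebra A B] [Algebra A L] [Algebra B L] [IsScalarTower A B L]
    (M : Submonoid A) [IsLocalization M B] [IsFractionRing B L]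
    (hAB : Function.Injective (algebraMap A B)) : IsFractionRing A L := by
  have : FaithfulSMul A L := (faithfulSMul_iff_algebraMap_injective A L).2 <| by
    rw [IsScalarTower.algebraMap_eq A B L]
    exact (IsFractionRing.injective B L).comp hAB
  have hne (s : M) : algebraMap B L (algebraMap A B s) ≠ 0 :=
    ((IsLocalization.map_units B s).map _).ne_zero
  refine .of_field A L fun z ↦ ?_
  obtain ⟨x, y, -, rfl⟩ := IsFractionRing.div_surjective (A := B) z
  obtain ⟨⟨a, s⟩, hx⟩ := IsLocalization.surj M x
  obtain ⟨⟨b, t⟩, hy⟩ := IsLocalization.surj M y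
  refine ⟨a * t, b * s, ?_⟩
  simp only [IsScalarTower.algebraMap_apply A B L, map_mul, ← hx, ← hy]
  rw [mul_right_comm _ _ (algebraMap B L (algebraMap A B t)), mul_div_mul_right _ _ (hne s),
    mul_div_mul_right _ _ (hne t)]

theorem finite_integralClosure_of_essFiniteType (K B L : Type*) [Field K] [CharZero K] [CommRing B]
    [IsDomain B] [Algebra K B] [Algebra.EssFiniteType K B] [Field L] [Algebra B L]
    [IsFractionRing B L] : Module.Finite B (integralClosure B L) := by
  let B₀ := Algebra.EssFiniteType.subalgebra K B
  let M := Algebra.EssFiniteType.submonoid K B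
  have : IsFractionRing B₀ L := isFractionRing_of_isLocalization_of_injective B L M
    Subtype.val_injective
  have := finite_integralClosure_of_finiteType K B₀ L
  exact finite_integralClosure_of_isLocalization B L M

end IntegralClosure

section ValuativeCriterion

open IsLocalRing

theorem isPrincipalIdealRing_localization_of_height_le_one {C : Type*} [CommRing C] [IsDomain C]
    [IsNoetherianRing C] [IsIntegrallyClosed C] {Q : Ideal C} [Q.IsPrime] (hQ : Q.height ≤ 1) :
    IsPrincipalIdealRing (Localization.AtPrime Q) := by
  have hle : Q.primeCompl ≤ nonZeroDivisors C := Q.primeCompl_le_nonZeroDivisors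
  have := isIntegrallyClosed_of_isLocalization (Localization.AtPrime Q) Q.primeCompl hle
  have : Ring.KrullDimLE 1 (Localization.AtPrime Q) := by
    rw [Ring.krullDimLE_iff, IsLocalization.AtPrime.ringKrullDim_eq_height Q]
    exact_mod_cast hQ
  apply ((tfae_of_isNoetherianRing_of_isLocalRing_of_isDomain (Localization.AtPrime Q)).out 0 3).2
  exact ⟨inferInstance, fun P hP hPp ↦ eq_maximalIdeal (hPp.isMaximal_of_ne_bot hP)⟩

theorem isDiscreteValuationRing_localization_of_mem_minimalPrimes {C : Type*} [CommRing C]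
    [IsDomain C] [IsNoetherianRing C] [IsIntegrallyClosed C] {b : C} (hb : b ≠ 0) {Q : Ideal C}
    [Q.IsPrime] (hQ : Q ∈ (Ideal.span {b}).minimalPrimes) :
    IsDiscreteValuationRing (Localization.AtPrime Q) := by
  have := isPrincipalIdealRing_localization_of_height_le_one
    (Ideal.height_le_one_of_isPrincipal_of_mem_minimalPrimes _ Q hQ)
  have : Q ≠ ⊥ := fun h ↦ hb (by simpa [h] using hQ.1.2)
  refine { not_a_field' := ?_ }
  rw [← Localization.AtPrime.map_eq_maximalIdeal]
  rwa [Ne, Ideal.map_eq_bot_iff_of_injective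
    (IsLocalization.injective _ Q.primeCompl_le_nonZeroDivisors)]

theorem exists_algHom_isDVR_of_isIntegrallyClosed (K : Type*) {C : Type u} [CommRing K]
    [CommRing C] [IsDomain C] [IsNoetherianRing C] [IsIntegrallyClosed C] [Algebra K C]
    [Algebra.EssFiniteType K C] {c : C} (hc : c ≠ 0) (hcu : ¬ IsUnit c) :
    ∃ (V : Type u) (_ : CommRing V) (_ : IsDomain V) (_ : IsDiscreteValuationRing V)
      (_ : Algebra K V) (_ : Algebra.EssFiniteType K V) (φ : C →ₐ[K] V),
      φ c ≠ 0 ∧ ¬ IsUnit (φ c) := by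
  obtain ⟨Q, hQ⟩ := Ideal.nonempty_minimalPrimes (mt Ideal.span_singleton_eq_top.1 hcu)
  have : Q.IsPrime := hQ.1.1
  refine ⟨Localization.AtPrime Q, inferInstance, inferInstance,
    isDiscreteValuationRing_localization_of_mem_minimalPrimes hc hQ, inferInstance, .comp K C _,
    IsScalarTower.toAlgHom K C _, ?_, fun h ↦ ?_⟩
  · exact (map_ne_zero_iff _ (IsLocalization.injective _ Q.primeCompl_le_nonZeroDivisors)).2 hc
  · exact (IsLocalization.AtPrime.isUnit_to_map_iff _ Q c).1 h
      (hQ.1.2 (Ideal.mem_span_singleton_self c))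

theorem exists_algHom_isDVR_of_isDomain (K : Type*) {B : Type u} [Field K] [CharZero K] [CommRing B]
    [IsDomain B] [Algebra K B] [Algebra.EssFiniteType K B] {b : B} (hb : b ≠ 0)
    (hbu : ¬ IsUnit b) :
    ∃ (V : Type u) (_ : CommRing V) (_ : IsDomain V) (_ : IsDiscreteValuationRing V)
      (_ : Algebra K V) (_ : Algebra.EssFiniteType K V) (φ : B →ₐ[K] V),
      φ b ≠ 0 ∧ ¬ IsUnit (φ b) := by
  let C := integralClosure B (FractionRing B)
  have : Module.Finite B C := finite_integralClosure_of_essFiniteType K B (FractionRing B)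
  have : IsNoetherianRing B := Algebra.EssFiniteType.isNoetherianRing K B
  have : IsNoetherianRing C := .of_finite B C
  have : IsIntegrallyClosed C :=
    integralClosure.isIntegrallyClosedOfFiniteExtension (FractionRing B)
  have : Algebra.EssFiniteType K C := .comp K B C
  obtain ⟨V, _, _, _, _, _, φ, hφ⟩ := exists_algHom_isDVR_of_isIntegrallyClosed K
    (c := algebraMap B C b) ((map_ne_zero_iff _ (FaithfulSMul.algebraMap_injective B C)).2 hb)
    ((isUnit_map_iff _ b).not.2 hbu)
  exact ⟨V, _, ‹_›, ‹_›, _, ‹_›, φ.comp (IsScalarTower.toAlgHom K B C), hφ⟩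

theorem exists_algHom_isDVR (K : Type*) {A : Type u} [Field K] [CharZero K] [CommRing A]
    [Algebra K A] [Algebra.EssFiniteType K A] {a : A} (ha : a ∈ nonZeroDivisors A)
    (hau : ¬ IsUnit a) :
    ∃ (V : Type u) (_ : CommRing V) (_ : IsDomain V) (_ : IsDiscreteValuationRing V)
      (_ : Algebra K V) (_ : Algebra.EssFiniteType K V) (φ : A →ₐ[K] V),
      φ a ≠ 0 ∧ ¬ IsUnit (φ a) := by
  obtain ⟨Q, hQ, haQ⟩ := exists_max_ideal_of_mem_nonunits hau
  obtain ⟨p, hp, hpQ⟩ := Ideal.exists_minimalPrimes_le (I := ⊥) (J := Q) bot_le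
  have : p.IsPrime := hp.1.1
  have hap : Ideal.Quotient.mkₐ K p a ≠ 0 := fun h ↦
    notMem_nonZeroDivisors_of_mem_mem_minimalPrimes (Ideal.Quotient.eq_zero_iff_mem.1 h) hp ha
  have hau' : ¬ IsUnit (Ideal.Quotient.mkₐ K p a) := fun h ↦ by
    simpa [Ideal.Quotient.eq_zero_iff_mem.2 haQ] using h.map (Ideal.Quotient.factor hpQ)
  obtain ⟨V, _, _, _, _, _, φ, hφ⟩ := exists_algHom_isDVR_of_isDomain K hap hau'
  exact ⟨V, _, ‹_›, ‹_›, _, ‹_›, φ.comp (Ideal.Quotient.mkₐ K p), hφ⟩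

end ValuativeCriterion

/-- The affine chart `S[I / f]` of the blowup of `Spec S` along `I` on which `f` generates the
pullback of `I`, realised as the subalgebra of `S[1 / f]` generated by the fractions `a / f` with
`a ∈ I`. -/
noncomputable def blowupChart {S : Type*} [CommRing S] (I : Ideal S) (f : S) :
    Subalgebra S (Localization.Away f) :=
  Algebra.adjoin S
    (I • Submodule.span S {IsLocalization.Away.invSelf f} : Submodule S (Localization.Away f))

namespace blowupChart

variable {S : Type*} [CommRing S] {I : Ideal S} {f : S}

theorem finiteType (hI : I.FG) : Algebra.FiniteType S (blowupChart I f) := by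
  obtain ⟨s, hs⟩ := Submodule.FG.smul hI (Submodule.fg_span_singleton
    (IsLocalization.Away.invSelf f : Localization.Away f))
  rw [← Subalgebra.fg_iff_finiteType, blowupChart, ← hs, Algebra.adjoin_span]
  exact ⟨s, rfl⟩

theorem smul_invSelf : f • (IsLocalization.Away.invSelf f : Localization.Away f) = 1 := by
  rw [Algebra.smul_def, IsLocalization.Away.mul_invSelf]

theorem algebraMap_dvd_algebraMap {x : S} (hx : x ∈ I) :
    algebraMap S (blowupChart I f) f ∣ algebraMap S (blowupChart I f) x := by
  refine ⟨⟨x • IsLocalization.Away.invSelf f, Algebra.subset_adjoin <|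
    Submodule.smul_mem_smul hx (Submodule.mem_span_singleton_self _)⟩, Subtype.ext ?_⟩
  rw [← Algebra.smul_def, Subalgebra.coe_smul, smul_comm, smul_invSelf,
    ← Algebra.algebraMap_eq_smul_one]
  rfl

theorem algebraMap_mem_nonZeroDivisors :
    algebraMap S (blowupChart I f) f ∈ nonZeroDivisors (blowupChart I f) :=
  mem_nonZeroDivisors_of_injective (f := (blowupChart I f).val) Subtype.val_injective
    (IsLocalization.Away.algebraMap_isUnit f).mem_nonZeroDivisors

theorem exists_pow_smul_eq_algebraMap (hf : f ∈ I) {y : Localization.Away f}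
    (hy : y ∈ blowupChart I f) :
    ∃ n, ∃ a ∈ I ^ n, f ^ n • y = algebraMap S (Localization.Away f) a := by
  induction hy using Algebra.adjoin_induction with
  | mem x hx =>
    obtain ⟨a, ha, rfl⟩ := Submodule.mem_smul_span_singleton.1 hx
    exact ⟨1, a, by rwa [pow_one],
      by rw [pow_one, smul_comm, smul_invSelf, Algebra.algebraMap_eq_smul_one]⟩
  | algebraMap r => exact ⟨0, r, by simp, by simp⟩
  | add x y _ _ hx hy =>
    obtain ⟨n, a, ha, hxa⟩ := hx
    obtain ⟨m, b, hb, hyb⟩ := hy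
    refine ⟨n + m, f ^ m * a + f ^ n * b, add_mem ?_ ?_, ?_⟩
    · rw [add_comm n, pow_add]
      exact Ideal.mul_mem_mul (Ideal.pow_mem_pow hf m) ha
    · rw [pow_add]
      exact Ideal.mul_mem_mul (Ideal.pow_mem_pow hf n) hb
    · simp only [map_add, map_mul, ← hxa, ← hyb, Algebra.smul_def, map_pow]
      ring
  | mul x y _ _ hx hy =>
    obtain ⟨n, a, ha, hxa⟩ := hx
    obtain ⟨m, b, hb, hyb⟩ := hy
    exact ⟨n + m, a * b, pow_add I n m ▸ Ideal.mul_mem_mul ha hb,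
      by rw [pow_add, ← smul_mul_smul_comm, hxa, hyb, map_mul]⟩

theorem exists_pow_mem_pow_of_isUnit (hf : f ∈ I)
    (hu : IsUnit (algebraMap S (blowupChart I f) f)) : ∃ n, 0 < n ∧ f ^ n ∈ I ^ (n + 1) := by
  obtain ⟨y, hy⟩ := hu.exists_right_inv
  have hfy : f • (y : Localization.Away f) = 1 := by
    rw [Algebra.smul_def]
    exact congrArg Subtype.val hy
  obtain ⟨n, a, ha, hya⟩ := exists_pow_smul_eq_algebraMap hf y.2
  have heq : algebraMap S (Localization.Away f) (f ^ n) = algebraMap S _ (f * a) := by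
    rw [map_mul, ← hya, ← Algebra.smul_def, smul_comm, hfy, Algebra.algebraMap_eq_smul_one]
  obtain ⟨⟨_, k, rfl⟩, hk⟩ := (IsLocalization.eq_iff_exists (Submonoid.powers f) _).1 heq
  refine ⟨k + n + 1, by lia, ?_⟩
  have hpow : f ^ (k + n + 1) = f ^ (k + 2) * a := by linear_combination f * hk
  rw [hpow, show k + n + 1 + 1 = (k + 2) + n by lia, pow_add]
  exact Ideal.mul_mem_mul (Ideal.pow_mem_pow hf _) ha

end blowupChart

theorem exists_algHom_isDVR_dvd (K : Type*) {S : Type u} [Field K] [CharZero K] [CommRing S]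
    [Algebra K S] [Algebra.EssFiniteType K S] {I : Ideal S} {f : S} (hf : f ∈ I)
    (h : ∀ n, 0 < n → f ^ n ∉ I ^ (n + 1)) :
    ∃ (V : Type u) (_ : CommRing V) (_ : IsDomain V) (_ : IsDiscreteValuationRing V)
      (_ : Algebra K V) (_ : Algebra.EssFiniteType K V) (α : S →ₐ[K] V),
      (α f ≠ 0 ∧ ¬ IsUnit (α f)) ∧ ∀ x ∈ I, α f ∣ α x := by
  have : IsNoetherianRing S := Algebra.EssFiniteType.isNoetherianRing K S
  have : Algebra.FiniteType S (blowupChart I f) :=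
    blowupChart.finiteType (IsNoetherian.noetherian I)
  have : Algebra.EssFiniteType K (blowupChart I f) := .comp K S (blowupChart I f)
  have hu : ¬ IsUnit (algebraMap S (blowupChart I f) f) := fun hu ↦ by
    obtain ⟨n, hn, hfn⟩ := blowupChart.exists_pow_mem_pow_of_isUnit hf hu
    exact h n hn hfn
  obtain ⟨V, _, _, _, _, _, φ, hφ⟩ :=
    exists_algHom_isDVR K (A := blowupChart I f) blowupChart.algebraMap_mem_nonZeroDivisors hu
  exact ⟨V, _, ‹_›, ‹_›, _, ‹_›, φ.comp (IsScalarTower.toAlgHom K S (blowupChart I f)), hφ,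
    fun x hx ↦ map_dvd φ (blowupChart.algebraMap_dvd_algebraMap hx)⟩

theorem exists_pow_mem_pow_of_forall_derivation_mem {K : Type*} {S : Type u} [Field K] [CharZero K]
    [CommRing S] [Algebra K S] [Algebra.EssFiniteType K S] [Module.Projective S Ω[S⁄K]]
    {I : Ideal S} {f : S} (hf : f ∈ I) (h : ∀ D : Derivation K S S, D f ∈ I) :
    ∃ n, 0 < n ∧ f ^ n ∈ I ^ (n + 1) := by
  by_contra! hpow
  obtain ⟨V, _, _, _, _, _, α, ⟨hα0, hαu⟩, hdvd⟩ := exists_algHom_isDVR_dvd K hf hpow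
  have := formallySmooth_of_isDVR K V
  obtain ⟨δ, hδ⟩ := exists_derivation_not_dvd K hα0 hαu
  algebraize [α.toRingHom]
  have hmap : I.map (algebraMap S V) ≤ Ideal.span {α f} :=
    Ideal.map_le_iff_le_comap.2 fun x hx ↦ Ideal.mem_span_singleton.2 (hdvd x hx)
  have hδI := derivation_algebraMap_mem_map_smul_top h δ
  rw [smul_eq_mul, Ideal.mul_top] at hδI
  exact hδ (Ideal.mem_span_singleton.1 (hmap hδI))

/-- **Hübl**: let `K` be a field of characteristic zero and `S` a smooth `K`-algebra,
essentially of finite type over `K`. For a radical ideal `I ⊆ S` and `f ∈ I`,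
the following are equivalent: (1) `∂(f) ∈ I` for every `K`-linear derivation `∂ : S → S`;
(2) `f ∈ I^{(2)}`; (3) `f^n ∈ I^{n+1}` for some positive integer `n`. -/
theorem derivation_mem_iff_mem_symbolicPower_two {K S : Type u} [Field K] [CharZero K]
    [CommRing S] [Algebra K S] [Algebra.EssFiniteType K S] [Algebra.FormallySmooth K S]
    (I : Ideal S) (hI : I.IsRadical) (f : S) (hf : f ∈ I) :
    ((∀ D : Derivation K S S, D f ∈ I) ↔ f ∈ symbolicPower I 2) ∧
      (f ∈ symbolicPower I 2 ↔ ∃ n : ℕ, 0 < n ∧ f ^ n ∈ I ^ (n + 1)) := by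
  let : Algebra ℚ S := Algebra.compHom S (algebraMap ℚ K)
  have h12 : (∀ D : Derivation K S S, D f ∈ I) ↔ f ∈ symbolicPower I 2 :=
    ⟨mem_symbolicPower_two_of_forall_derivation_mem hI hf,
      derivation_mem_of_mem_symbolicPower_two hI hf⟩
  refine ⟨h12, h12.symm.trans ⟨exists_pow_mem_pow_of_forall_derivation_mem hf, ?_⟩⟩
  rintro ⟨n, -, hn⟩ D
  exact derivation_mem_of_pow_mem D hI hf hn
end

section
/- Let K be a field of characteristic zero, and let S be a smooth K-algebra, essentially of finite type over K. Given a radical ideal I ⊆ S, there exists a positive integer N such that (I^{(2)})^n ⊆ I^{n+1} for all n ≥ N. -/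
universe u

/-!
If `f ∈ I^{(2)}`, then `s f ∈ I²` for some `s` regular modulo `I`, and since `Ω_S` is flat this
gives `df ∈ I Ω_S`. In the extended Rees algebra `S[I T, T⁻¹]` put `u = T⁻¹` and `F = f T`.
Then `u dF + F du = df` is divisible by `u`, so `F du` is as well. This forces `F` into the radical
of `(u)`: in the local ring at a minimal prime of `u` not containing `F`, `du` would be divisible
by `u`. Modulo `u²` that local ring is Artinian, and over a coefficient field `κ` it is finite free
over `κ[ε]` with `ε ↦ u`; the trace of differentials then sends `du` to the rank, nonzero in
characteristic zero, but kills the multiples of `u`. Finally, `rad (u) ^ N ⊆ (u)` reads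
`(I^{(2)}) ^ N ⊆ I ^ (N + 1)` in degree `N`.
-/

open KaehlerDifferential Module

section TraceOfDifferentials

variable {k B C M ι : Type*} [CommRing k] [CommRing B] [CommRing C] [Algebra k B] [Algebra B C]
  [AddCommGroup M] [Module k M] [Module B M] [Fintype ι] [DecidableEq ι]

theorem sum_leftMulMatrix_smul_derivation_mul (b : Basis ι B C) (δ : Derivation k B M) (x y z : C) :
    ∑ i, ∑ j, Algebra.leftMulMatrix b x i j • δ (Algebra.leftMulMatrix b (y * z) j i) =
      ∑ i, ∑ j, Algebra.leftMulMatrix b (y * x) i j • δ (Algebra.leftMulMatrix b z j i) +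
      ∑ i, ∑ j, Algebra.leftMulMatrix b (z * x) i j • δ (Algebra.leftMulMatrix b y j i) := by
  let L := Algebra.leftMulMatrix b
  calc ∑ i, ∑ j, L x i j • δ (L (y * z) j i)
    _ = ∑ i, ∑ j, ∑ l, (L x i j * L y j l) • δ (L z l i) +
        ∑ i, ∑ j, ∑ l, (L z l i * L x i j) • δ (L y j l) := by
      simp only [map_mul, Matrix.mul_apply, map_sum, Derivation.leibniz, Finset.smul_sum,
        smul_add, smul_smul, Finset.sum_add_distrib, mul_comm (L z _ _)]
    _ = ∑ i, ∑ l, L (y * x) i l • δ (L z l i) + ∑ l, ∑ j, L (z * x) l j • δ (L y j l) := by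
      rw [mul_comm y x]
      simp only [map_mul, Matrix.mul_apply, Finset.sum_smul]
      congr 1
      · exact Finset.sum_congr rfl fun i _ => Finset.sum_comm
      · exact Finset.sum_comm_cycle.trans (Finset.sum_congr rfl fun l _ => Finset.sum_comm)

variable [Algebra k C] [IsScalarTower k B C] [IsScalarTower k B M]

/-- The `C`-module structure on `Hom_B(C, M)` by precomposition with multiplication. It is a local
instance because it would clash with the pointwise structure when `M` is itself a `C`-module. -/
abbrev precompModule (B C M : Type*) [CommRing B] [CommRing C] [Algebra B C]
    [AddCommGroup M] [Module B M] : Module C (C →ₗ[B] M) where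
  smul c φ := φ ∘ₗ LinearMap.mulLeft B c
  one_smul φ := LinearMap.ext fun x => congrArg φ (one_mul x)
  mul_smul c d φ := LinearMap.ext fun x => congrArg φ (by ring : c * d * x = d * (c * x))
  smul_zero _ := rfl
  smul_add _ _ _ := rfl
  add_smul c d φ := LinearMap.ext fun x => (congrArg φ (add_mul c d x)).trans (map_add φ _ _)
  zero_smul φ := LinearMap.ext fun x => (congrArg φ (zero_mul x)).trans (map_zero φ)

attribute [local instance] precompModule

theorem precomp_smul_apply (c : C) (φ : C →ₗ[B] M) (x : C) : (c • φ) x = φ (c * x) := rfl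

theorem isScalarTower_precompModule : IsScalarTower k C (C →ₗ[B] M) where
  smul_assoc r c φ := by
    ext x
    rw [precomp_smul_apply, LinearMap.smul_apply, precomp_smul_apply, smul_mul_assoc,
      LinearMap.map_smul_of_tower]

attribute [local instance] isScalarTower_precompModule

/-- The derivation `y ↦ (x ↦ tr (L_x * δ L_y))` of a finite free `B`-algebra `C` induced by a
derivation `δ` of `B`, where `L_x` is the matrix of multiplication by `x` and `δ` acts entrywise.
Values are taken in `Hom_B(C, M)` because `y ↦ tr (δ L_y)` alone does not satisfy the Leibniz
rule. -/
noncomputable def traceDerivation (b : Basis ι B C) (δ : Derivation k B M) :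
    Derivation k C (C →ₗ[B] M) :=
  .mk'
    { toFun := fun y =>
        { toFun := fun x =>
            ∑ i, ∑ j, Algebra.leftMulMatrix b x i j • δ (Algebra.leftMulMatrix b y j i)
          map_add' := fun x x' => by simp [add_smul, Finset.sum_add_distrib]
          map_smul' := fun r x => by simp [smul_smul, Finset.smul_sum] }
      map_add' := fun y y' => by ext x; simp [Finset.sum_add_distrib]
      map_smul' := fun r y => by
        ext x
        have h : Algebra.leftMulMatrix b (r • y) = r • Algebra.leftMulMatrix b y :=
          ((Algebra.leftMulMatrix b).restrictScalars k).map_smul_of_tower r y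
        simp [h, Finset.smul_sum, smul_comm r] }
    fun y z => LinearMap.ext fun x => sum_leftMulMatrix_smul_derivation_mul b δ x y z

theorem traceDerivation_algebraMap_apply_one (b : Basis ι B C) (δ : Derivation k B M) (x : B) :
    traceDerivation b δ (algebraMap B C x) 1 = Fintype.card ι • δ x := by
  change ∑ i, ∑ j, Algebra.leftMulMatrix b 1 i j •
    δ (Algebra.leftMulMatrix b (algebraMap B C x) j i) = _
  simp [AlgHom.commutes, Matrix.algebraMap_matrix_apply, Matrix.one_apply]

/-- The trace of differentials `x dy ↦ tr (L_x * δ L_y)` from `Ω[C⁄k]` to `M`, for a finite free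
`B`-algebra `C` and a derivation `δ : B → M`. -/
noncomputable def traceKaehler (b : Basis ι B C) (δ : Derivation k B M) : Ω[C⁄k] →ₗ[B] M where
  toFun ω := (traceDerivation b δ).liftKaehlerDifferential ω 1
  map_add' ω ω' := by rw [map_add, LinearMap.add_apply]
  map_smul' x ω := by
    rw [← algebraMap_smul C x ω, map_smul, precomp_smul_apply, ← Algebra.smul_def, map_smul,
      RingHom.id_apply]

theorem traceKaehler_D_algebraMap (b : Basis ι B C) (δ : Derivation k B M) (x : B) :
    traceKaehler b δ (D k C (algebraMap B C x)) = Fintype.card ι • δ x :=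
  (LinearMap.congr_fun ((traceDerivation b δ).liftKaehlerDifferential_comp_D _) 1).trans
    (traceDerivation_algebraMap_apply_one b δ x)

end TraceOfDifferentials

section DualNumbers

open IsLocalRing TensorProduct
open scoped DualNumber

theorem D_algebraMap_ne_smul {k B C : Type*} [CommRing k] [CommRing B] [IsLocalRing B]
    [CharZero (ResidueField B)] [CommRing C] [Nontrivial C] [Algebra k B] [Algebra k C]
    [Algebra B C] [IsScalarTower k B C] [Module.Free B C] [Module.Finite B C]
    (δ : Derivation k B (ResidueField B)) {e : B} (he : e ∈ maximalIdeal B) (hδ : δ e ≠ 0)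
    (ω : Ω[C⁄k]) : D k C (algebraMap B C e) ≠ algebraMap B C e • ω := by
  intro h
  let b := Module.Free.chooseBasis B C
  have htrace := congrArg (traceKaehler b δ) h
  rw [traceKaehler_D_algebraMap, algebraMap_smul, map_smul, ← algebraMap_smul (ResidueField B) e,
    ResidueField.algebraMap_eq, (residue_eq_zero_iff e).2 he, zero_smul, nsmul_eq_mul,
    mul_eq_zero_iff_right hδ, Nat.cast_eq_zero] at htrace
  have := b.index_nonempty
  exact Fintype.card_ne_zero htrace

theorem free_of_maximalIdeal_eq_span_singleton {B M : Type*} [CommRing B] [IsLocalRing B]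
    [AddCommGroup M] [Module B M] [Module.FinitePresentation B M] {e : B}
    (he : maximalIdeal B = Ideal.span {e})
    (h : ∀ x : M, e • x = 0 → x ∈ Ideal.torsionOf B B e • (⊤ : Submodule B M)) :
    Module.Free B M := by
  refine Module.free_of_maximalIdeal_rTensor_injective ?_
  let e' : maximalIdeal B := ⟨e, he ▸ Ideal.mem_span_singleton_self e⟩
  have tmul_eq (t : maximalIdeal B ⊗[B] M) : ∃ x : M, t = e' ⊗ₜ x := by
    induction t with
    | zero => exact ⟨0, by rw [tmul_zero]⟩
    | tmul a x =>
      obtain ⟨c, hc⟩ := Ideal.mem_span_singleton'.1 (he ▸ a.2 : (a : B) ∈ Ideal.span {e})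
      refine ⟨c • x, ?_⟩
      rw [← smul_tmul]
      congr 1
      exact Subtype.ext hc.symm
    | add s t hs ht =>
      obtain ⟨x, rfl⟩ := hs
      obtain ⟨y, rfl⟩ := ht
      exact ⟨x + y, by rw [tmul_add]⟩
  have tmul_eq_zero (x : M) (hx : x ∈ Ideal.torsionOf B B e • (⊤ : Submodule B M)) :
      e' ⊗ₜ[B] x = 0 := by
    induction hx using Submodule.smul_induction_on' with
    | smul a ha x _ =>
      rw [← smul_tmul, show a • e' = 0 from Subtype.ext ha, zero_tmul]
    | add x _ y _ hx hy => rw [tmul_add, hx, hy, add_zero]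
  rw [injective_iff_map_eq_zero]
  intro t ht
  obtain ⟨x, rfl⟩ := tmul_eq t
  refine tmul_eq_zero x (h x ?_)
  simpa using congrArg (TensorProduct.lid B M) ht

theorem residue_eq_algebraMap_fst {k : Type*} [Field k] (x : k[ε]) :
    residue k[ε] x = algebraMap k (ResidueField k[ε]) x.fst := by
  rw [IsScalarTower.algebraMap_apply k k[ε] (ResidueField k[ε]), ResidueField.algebraMap_eq,
    ← sub_eq_zero, ← map_sub, residue_eq_zero_iff,
    DualNumber.maximalIdeal_eq_span_singleton_eps, Ideal.mem_span_singleton,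
    ← DualNumber.fst_eq_zero_iff_eps_dvd, TrivSqZeroExt.fst_sub]
  exact sub_self x.fst

/-- The derivation `a + b ε ↦ b` of the dual numbers, with values in the residue field `k`. -/
noncomputable def sndDerivation (k : Type*) [Field k] : Derivation k k[ε] (ResidueField k[ε]) :=
  .mk' (Algebra.linearMap k (ResidueField k[ε]) ∘ₗ TrivSqZeroExt.sndHom k k) fun x y => by
    simp only [LinearMap.comp_apply, TrivSqZeroExt.sndHom_apply, Algebra.linearMap_apply,
      DualNumber.snd_mul, map_add, map_mul, Algebra.smul_def, ResidueField.algebraMap_eq,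
      residue_eq_algebraMap_fst]
    ring

theorem sndDerivation_eps (k : Type*) [Field k] : sndDerivation k ε = 1 :=
  map_one (algebraMap k (ResidueField k[ε]))

theorem D_ne_smul_of_mul_self_eq_zero {k C : Type*} [Field k] [CharZero k] [CommRing C]
    [Nontrivial C] [Algebra k C] [Module.Finite k C] {u : C} (hu : u * u = 0)
    (hann : ∀ x, u * x = 0 → u ∣ x) (ω : Ω[C⁄k]) : D k C u ≠ u • ω := by
  let φ : k[ε] →ₐ[k] C :=
    DualNumber.lift ⟨(Algebra.ofId k C, u), hu, fun a => Algebra.commute_algebraMap_right a u⟩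
  have hφ : φ ε = u := DualNumber.lift_apply_eps _
  algebraize [φ.toRingHom]
  have : IsScalarTower k k[ε] C := .of_algHom φ
  have : Module.Finite k[ε] C := .of_restrictScalars_finite k k[ε] C
  have := Module.finitePresentation_of_finite k[ε] C
  have : Module.Free k[ε] C := by
    refine free_of_maximalIdeal_eq_span_singleton DualNumber.maximalIdeal_eq_span_singleton_eps
      fun x hx => ?_
    rw [Algebra.smul_def] at hx
    obtain ⟨y, rfl⟩ := hann x (hφ ▸ hx)
    rw [← hφ]
    exact Submodule.smul_mem_smul (DualNumber.eps_mul_eps : (ε : k[ε]) * ε = 0) trivial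
  have : CharZero (ResidueField k[ε]) := charZero_of_injective_algebraMap
    (algebraMap k (ResidueField k[ε])).injective
  have hε : (ε : k[ε]) ∈ maximalIdeal k[ε] := by
    rw [DualNumber.maximalIdeal_eq_span_singleton_eps]
    exact Ideal.mem_span_singleton_self ε
  have := D_algebraMap_ne_smul (C := C) (sndDerivation k) hε
    (by rw [sndDerivation_eps]; exact one_ne_zero)
  rw [← hφ]
  exact this ω

end DualNumbers

section CoefficientFields

open IsLocalRing

theorem formallySmooth_of_charZero (K L : Type*) [Field K] [Field L] [CharZero K] [Algebra K L] :
    Algebra.FormallySmooth K L := by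
  obtain ⟨s, hs⟩ := exists_isTranscendenceBasis K L
  have : Algebra.IsAlgebraic (IntermediateField.adjoin K (Set.range ((↑) : s → L))) L :=
    hs.isAlgebraic_field
  exact .of_algebraicIndependent_of_isSeparable hs.1

theorem exists_algHom_residue_comp_eq_id (K C : Type*) [CommRing K] [CommRing C] [IsLocalRing C]
    [IsArtinianRing C] [Algebra K C] [Algebra.FormallySmooth K (ResidueField C)] :
    ∃ s : ResidueField C →ₐ[K] C, ∀ x, residue C (s x) = x := by
  let π : C →ₐ[K] ResidueField C := IsScalarTower.toAlgHom K C (ResidueField C)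
  have hker : RingHom.ker (π : C →+* ResidueField C) = maximalIdeal C := ker_residue
  have hnil : IsNilpotent (RingHom.ker (π : C →+* ResidueField C)) := by
    rw [hker, ← jacobson_eq_maximalIdeal ⊥ bot_ne_top]
    exact IsArtinianRing.isNilpotent_jacobson_bot
  exact ⟨Algebra.FormallySmooth.liftOfSurjective (AlgHom.id K _) π residue_surjective hnil,
    Algebra.FormallySmooth.liftOfSurjective_apply (AlgHom.id K _) π residue_surjective hnil⟩

variable {K A : Type*} [Field K] [CharZero K] [CommRing A] [IsLocalRing A] [Algebra K A]

theorem D_ne_smul_of_isArtinianRing [IsArtinianRing A] {u : A} (hu : u * u = 0)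
    (hann : ∀ x, u * x = 0 → u ∣ x) (ω : Ω[A⁄K]) : D K A u ≠ u • ω := by
  intro h
  have := formallySmooth_of_charZero K (ResidueField A)
  obtain ⟨s, hs⟩ := exists_algHom_residue_comp_eq_id K A
  algebraize [s.toRingHom]
  have : IsScalarTower K (ResidueField A) A := .of_algHom s
  let π : A →ₐ[ResidueField A] ResidueField A := { residue A with commutes' := hs }
  have hker : RingHom.ker π ≤ nilradical A := by
    rw [Ring.KrullDimLE.nilradical_eq_maximalIdeal]
    exact ker_residue.le
  have : Module.Finite (ResidueField A) A :=
    Module.finite_of_surjective_of_ker_le_nilradical π residue_surjective hker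
      (IsNoetherian.noetherian _)
  have : CharZero (ResidueField A) :=
    charZero_of_injective_algebraMap (algebraMap K (ResidueField A)).injective
  refine D_ne_smul_of_mul_self_eq_zero (k := ResidueField A) hu hann
    (KaehlerDifferential.map K (ResidueField A) A A ω) ?_
  simpa using congrArg (KaehlerDifferential.map K (ResidueField A) A A) h

theorem D_ne_smul_of_maximalIdeal_mem_minimalPrimes [IsNoetherianRing A] {u : A}
    (hu : u ∈ nonZeroDivisors A) (hmin : maximalIdeal A ∈ (Ideal.span {u}).minimalPrimes)
    (ω : Ω[A⁄K]) : D K A u ≠ u • ω := by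
  intro h
  let J : Ideal A := Ideal.span {u} ^ 2
  have mem_J (x : A) : x ∈ J ↔ u * u ∣ x := by
    rw [show J = Ideal.span {u ^ 2} from Ideal.span_singleton_pow u 2, Ideal.mem_span_singleton,
      pow_two]
  have hJ : maximalIdeal A ∈ J.minimalPrimes := by
    rwa [← Ideal.radical_minimalPrimes, Ideal.radical_pow _ two_ne_zero,
      Ideal.radical_minimalPrimes]
  have := quotient_artinian_of_mem_minimalPrimes_of_isLocalRing J hJ
  have : Nontrivial (A ⧸ J) := Ideal.Quotient.nontrivial_iff.2 fun hJ_top =>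
    hJ.1.1.ne_top (top_le_iff.1 (hJ_top ▸ hJ.1.2))
  have : IsLocalRing (A ⧸ J) := .of_surjective' (Ideal.Quotient.mk J) Ideal.Quotient.mk_surjective
  refine D_ne_smul_of_isArtinianRing (u := Ideal.Quotient.mk J u) ?_ ?_
    (KaehlerDifferential.map K K A (A ⧸ J) ω) ?_
  · rw [← map_mul, Ideal.Quotient.eq_zero_iff_mem, mem_J]
  · intro x hx
    obtain ⟨a, rfl⟩ := Ideal.Quotient.mk_surjective x
    rw [← map_mul, Ideal.Quotient.eq_zero_iff_mem, mem_J] at hx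
    exact map_dvd _ ((dvd_cancel_left_mem_nonZeroDivisors hu).1 hx)
  · simpa [← algebraMap_smul (A ⧸ J) u] using
      congrArg (KaehlerDifferential.map K K A (A ⧸ J)) h

end CoefficientFields

section Radical

variable {K R : Type*} [Field K] [CharZero K] [CommRing R] [IsNoetherianRing R] [Algebra K R]

theorem mem_radical_of_smul_D_eq_smul {u F : R} (hu : u ∈ nonZeroDivisors R) {ω : Ω[R⁄K]}
    (h : F • D K R u = u • ω) : F ∈ (Ideal.span {u}).radical := by
  rw [← Ideal.sInf_minimalPrimes, Ideal.mem_sInf]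
  intro P hP
  by_contra hF
  have : P.IsPrime := hP.1.1
  let A := Localization.AtPrime P
  have : IsNoetherianRing A := IsLocalization.isNoetherianRing P.primeCompl A inferInstance
  have hmin : IsLocalRing.maximalIdeal A ∈ (Ideal.span {algebraMap R A u}).minimalPrimes := by
    rw [← Set.image_singleton, ← Ideal.map_span, ← Ideal.radical_minimalPrimes,
      IsLocalization.AtPrime.radical_map_of_mem_minimalPrimes A P _ hP,
      IsLocalization.AtPrime.map_eq_maximalIdeal P A, Ideal.minimalPrimes_eq_subsingleton_self]
    rfl
  obtain ⟨v, hv⟩ := (IsLocalization.map_units A (⟨F, hF⟩ : P.primeCompl)).exists_left_inv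
  refine D_ne_smul_of_maximalIdeal_mem_minimalPrimes
    (IsLocalization.map_nonZeroDivisors_le P.primeCompl A ⟨u, hu, rfl⟩) hmin
    (v • KaehlerDifferential.map K K R A ω) ?_
  calc D K A (algebraMap R A u) = v • algebraMap R A F • D K A (algebraMap R A u) := by
        rw [smul_smul, hv, one_smul]
    _ = v • KaehlerDifferential.map K K R A (F • D K R u) := by
        rw [map_smul, KaehlerDifferential.map_D, algebraMap_smul]
    _ = algebraMap R A u • v • KaehlerDifferential.map K K R A ω := by
        rw [h, map_smul, ← algebraMap_smul A u, smul_comm]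

end Radical

section ExtendedRees

open LaurentPolynomial

variable {S : Type*} [CommRing S]

/-- The extended Rees algebra `S[I T, T⁻¹]` of an ideal `I`, inside the Laurent polynomials. -/
noncomputable def extendedRees (I : Ideal S) : Subalgebra S S[T;T⁻¹] :=
  Algebra.adjoin S ({T (-1)} ∪ (fun a => C a * T 1) '' (I : Set S))

/-- The element `T⁻¹` of the extended Rees algebra. -/
noncomputable def tInv (I : Ideal S) : extendedRees I :=
  ⟨T (-1), Algebra.subset_adjoin (Or.inl rfl)⟩

/-- The degree-one element `a T` of the extended Rees algebra attached to `a ∈ I`. -/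
noncomputable def degreeOne {I : Ideal S} (a : I) : extendedRees I :=
  ⟨C (a : S) * T 1, Algebra.subset_adjoin (Or.inr ⟨a, a.2, rfl⟩)⟩

theorem tInv_mul_degreeOne {I : Ideal S} (a : I) :
    tInv I * degreeOne a = algebraMap S (extendedRees I) a := by
  refine Subtype.ext ?_
  change T (-1) * (C (a : S) * T 1) = (C (a : S) : S[T;T⁻¹])
  rw [mul_left_comm, ← T_add, neg_add_cancel, T_zero, mul_one]

theorem tInv_mem_nonZeroDivisors (I : Ideal S) : tInv I ∈ nonZeroDivisors (extendedRees I) := by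
  have hT : (T (-1) : S[T;T⁻¹]) ∈ nonZeroDivisors S[T;T⁻¹] := (isUnit_T (-1)).mem_nonZeroDivisors
  rw [mem_nonZeroDivisors_iff_right] at hT ⊢
  exact fun x hx => Subtype.ext (hT x (congrArg Subtype.val hx))

theorem isNoetherianRing_extendedRees [IsNoetherianRing S] (I : Ideal S) :
    IsNoetherianRing (extendedRees I) := by
  obtain ⟨t, ht⟩ := (IsNoetherian.noetherian I : I.FG)
  let G : Set S[T;T⁻¹] := {T (-1)} ∪ (fun a => C a * T 1) '' (t : Set S)
  have mem_adjoin : ∀ a ∈ Ideal.span (t : Set S), C a * T 1 ∈ Algebra.adjoin S G := by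
    intro a ha
    induction ha using Submodule.span_induction with
    | mem x hx => exact Algebra.subset_adjoin (Or.inr ⟨x, hx, rfl⟩)
    | zero => simp only [map_zero, zero_mul, zero_mem]
    | add x y _ _ hx hy => rw [map_add, add_mul]; exact add_mem hx hy
    | smul r x _ hx =>
      rw [smul_eq_mul, map_mul, mul_assoc]
      exact mul_mem (Subalgebra.algebraMap_mem _ r) hx
  have adjoin_eq : extendedRees I = Algebra.adjoin S G := by
    refine le_antisymm (Algebra.adjoin_le ?_) (Algebra.adjoin_mono ?_)
    · rintro _ (hx | ⟨a, ha, rfl⟩)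
      · exact Algebra.subset_adjoin (Or.inl hx)
      · exact mem_adjoin a (ht.ge ha)
    · exact Set.union_subset_union_right _ (Set.image_mono (ht ▸ Ideal.subset_span))
  have hfg : (extendedRees I).FG :=
    Subalgebra.fg_def.2 ⟨G, (Set.finite_singleton _).union (t.finite_toSet.image _), adjoin_eq.symm⟩
  have := (Subalgebra.fg_iff_finiteType _).1 hfg
  exact Algebra.FiniteType.isNoetherianRing S (extendedRees I)

theorem coeff_mul_mem_pow {I : Ideal S} {x y : S[T;T⁻¹]}
    (hx : ∀ n : ℤ, x.coeff n ∈ I ^ n.toNat) (hy : ∀ n : ℤ, y.coeff n ∈ I ^ n.toNat) (n : ℤ) :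
    (x * y).coeff n ∈ I ^ n.toNat := by
  rw [AddMonoidAlgebra.coeff_mul]
  refine Ideal.sum_mem _ fun i _ => Ideal.sum_mem _ fun j _ => ?_
  dsimp only
  split_ifs with h
  · have hle : n.toNat ≤ i.toNat + j.toNat := by lia
    exact Ideal.pow_le_pow_right hle (pow_add I _ _ ▸ Ideal.mul_mem_mul (hx i) (hy j))
  · exact zero_mem _

theorem coeff_mem_pow_of_mem_extendedRees {I : Ideal S} {x : S[T;T⁻¹]}
    (hx : x ∈ extendedRees I) (n : ℤ) : x.coeff n ∈ I ^ n.toNat := by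
  induction hx using Algebra.adjoin_induction generalizing n with
  | mem x hx =>
    rcases hx with rfl | ⟨a, ha, rfl⟩
    · rw [T_apply]
      split_ifs with h
      · simp [← h]
      · exact zero_mem _
    · dsimp only
      rw [← single_eq_C_mul_T, AddMonoidAlgebra.coeff_single, Finsupp.single_apply]
      split_ifs with h
      · simpa [← h] using ha
      · exact zero_mem _
  | algebraMap r =>
    rw [← C_eq_algebraMap, C_apply]
    split_ifs with h
    · simp [h]
    · exact zero_mem _
  | add x y _ _ hx hy => exact add_mem (hx n) (hy n)
  | mul x y _ _ hx hy => exact coeff_mul_mem_pow hx hy n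

theorem mem_pow_succ_of_tInv_dvd {I : Ideal S} {x : extendedRees I} (hx : tInv I ∣ x) {g : S}
    {n : ℕ} (hxg : (x : S[T;T⁻¹]) = C g * T n) : g ∈ I ^ (n + 1) := by
  obtain ⟨y, rfl⟩ := hx
  have hy : (y : S[T;T⁻¹]) = C g * T (n + 1 : ℕ) :=
    calc (y : S[T;T⁻¹]) = T (-1) * (y : S[T;T⁻¹]) * T 1 := by
          rw [mul_right_comm, ← T_add, neg_add_cancel, T_zero, one_mul]
      _ = C g * T n * T 1 := congrArg (· * (T 1 : S[T;T⁻¹])) hxg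
      _ = C g * T (n + 1 : ℕ) := by rw [mul_assoc, ← T_add, Nat.cast_succ]
  simpa [hy, ← single_eq_C_mul_T] using coeff_mem_pow_of_mem_extendedRees y.2 (n + 1 : ℕ)

theorem exists_mem_pow_coe_eq_C_mul_T {I J : Ideal S} (hJI : J ≤ I) {Q : Ideal (extendedRees I)}
    (hQ : ∀ (f : S) (hf : f ∈ J), degreeOne ⟨f, hJI hf⟩ ∈ Q) (n : ℕ) {g : S} (hg : g ∈ J ^ n) :
    ∃ x ∈ Q ^ n, (x : S[T;T⁻¹]) = C g * T n := by
  induction n generalizing g with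
  | zero => exact ⟨algebraMap S _ g, by simp, by simp⟩
  | succ n ih =>
    rw [pow_succ] at hg
    induction hg using Submodule.mul_induction_on' with
    | mem_mul_mem a ha b hb =>
      obtain ⟨x, hx, hxa⟩ := ih ha
      refine ⟨x * degreeOne ⟨b, hJI hb⟩, pow_succ Q n ▸ Ideal.mul_mem_mul hx (hQ b hb), ?_⟩
      change (x : S[T;T⁻¹]) * (C b * T 1) = _
      rw [hxa, map_mul, Nat.cast_succ, T_add]
      ring
    | add a _ b _ ha hb =>
      obtain ⟨x, hx, hxa⟩ := ha
      obtain ⟨y, hy, hyb⟩ := hb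
      exact ⟨x + y, add_mem hx hy, by rw [Subalgebra.coe_add, hxa, hyb, map_add, add_mul]⟩

theorem exists_pow_le_pow_succ_of_mem_radical_tInv [IsNoetherianRing S] {I J : Ideal S}
    (hJI : J ≤ I)
    (hJ : ∀ (f : S) (hf : f ∈ J), degreeOne ⟨f, hJI hf⟩ ∈ (Ideal.span {tInv I}).radical) :
    ∃ N : ℕ, J ^ N ≤ I ^ (N + 1) := by
  have := isNoetherianRing_extendedRees I
  obtain ⟨N, hN⟩ := (Ideal.span {tInv I}).exists_radical_pow_le_of_fg (IsNoetherian.noetherian _)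
  refine ⟨N, fun g hg => ?_⟩
  obtain ⟨x, hx, hxg⟩ := exists_mem_pow_coe_eq_C_mul_T hJI hJ N hg
  exact mem_pow_succ_of_tInv_dvd (Ideal.mem_span_singleton.1 (hN hx)) hxg

end ExtendedRees

section DifferentialsModI

theorem exists_map_eq_smul_of_mem_smul_top {S R M N : Type*} [CommRing S] [CommRing R]
    [Algebra S R] [AddCommGroup M] [Module S M] [AddCommGroup N] [Module S N] [Module R N]
    [IsScalarTower S R N] {I : Ideal S} {u : R} (hu : ∀ a ∈ I, u ∣ algebraMap S R a)
    (φ : M →ₗ[S] N) {w : M} (hw : w ∈ I • (⊤ : Submodule S M)) : ∃ y, φ w = u • y := by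
  induction hw using Submodule.smul_induction_on' with
  | smul a ha m _ =>
    obtain ⟨r, hr⟩ := hu a ha
    exact ⟨r • φ m, by rw [map_smul, smul_smul, ← hr, algebraMap_smul]⟩
  | add w _ w' _ hw hw' =>
    obtain ⟨y, hy⟩ := hw
    obtain ⟨y', hy'⟩ := hw'
    exact ⟨y + y', by rw [map_add, hy, hy', smul_add]⟩

variable {K S : Type*} [Field K] [CharZero K] [CommRing S] [Algebra K S]

theorem mem_radical_of_D_mem_smul_top {R : Type*} [CommRing R] [IsNoetherianRing R]
    [Algebra K R] [Algebra S R] [IsScalarTower K S R] {I : Ideal S} {u F : R} {f : S}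
    (hu : u ∈ nonZeroDivisors R) (huI : ∀ a ∈ I, u ∣ algebraMap S R a)
    (hf : D K S f ∈ I • (⊤ : Submodule S Ω[S⁄K])) (hF : u * F = algebraMap S R f) :
    F ∈ (Ideal.span {u}).radical := by
  obtain ⟨ω, hω⟩ := exists_map_eq_smul_of_mem_smul_top huI (KaehlerDifferential.map K K S R) hf
  rw [KaehlerDifferential.map_D, ← hF, Derivation.leibniz] at hω
  refine mem_radical_of_smul_D_eq_smul (K := K) hu (ω := ω - D K R F) ?_
  rw [smul_sub, ← hω, add_sub_cancel_left]

theorem exists_pow_le_pow_succ_of_D_mem_smul_top [IsNoetherianRing S] {I J : Ideal S}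
    (hJI : J ≤ I) (hJ : ∀ f ∈ J, D K S f ∈ I • (⊤ : Submodule S Ω[S⁄K])) :
    ∃ N : ℕ, J ^ N ≤ I ^ (N + 1) := by
  have := isNoetherianRing_extendedRees I
  exact exists_pow_le_pow_succ_of_mem_radical_tInv hJI fun f hf =>
    mem_radical_of_D_mem_smul_top (K := K) (tInv_mem_nonZeroDivisors I)
      (fun a ha => ⟨_, (tInv_mul_degreeOne ⟨a, ha⟩).symm⟩) (hJ f hf) (tInv_mul_degreeOne _)

end DifferentialsModI

section SymbolicSquare

open TensorProduct

theorem isSMulRegular_quotient_smul_top {S M : Type*} [CommRing S] [AddCommGroup M]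
    [Module S M] [Module.Flat S M] {I : Ideal S} {s : S} (hs : IsSMulRegular (S ⧸ I) s) :
    IsSMulRegular (M ⧸ I • (⊤ : Submodule S M)) s :=
  ((quotTensorEquivQuotSMul M I).isSMulRegular_congr s).1 (hs.rTensor M)

variable {S : Type*} [CommRing S] {I : Ideal S}

theorem isSMulRegular_quotient_of_forall_notMem_minimalPrimes (hI : I.IsRadical) {s : S}
    (hs : ∀ P ∈ I.minimalPrimes, s ∉ P) : IsSMulRegular (S ⧸ I) s := by
  rw [isSMulRegular_quotient_iff_mem_of_smul_mem]
  intro x hx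
  rw [← hI.radical, ← Ideal.sInf_minimalPrimes, Ideal.mem_sInf]
  exact fun P hP => (hP.1.1.mem_or_mem (hP.1.2 hx)).resolve_left (hs P hP)

theorem exists_notMem_mul_mem_pow_of_mem_symbolicPower {n : ℕ} {f : S}
    (hf : f ∈ symbolicPower I n) {P : Ideal S} (hP : P ∈ I.minimalPrimes) :
    ∃ s ∉ P, s * f ∈ I ^ n := by
  have : P.IsPrime := hP.1.1
  have hfP := (Submodule.mem_iInf _).1 ((Submodule.mem_iInf _).1 hf P) hP
  rwa [Ideal.mem_comap, IsLocalization.algebraMap_mem_map_algebraMap_iff P.primeCompl] at hfP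

theorem symbolicPower_le (hI : I.IsRadical) {n : ℕ} (hn : n ≠ 0) : symbolicPower I n ≤ I := by
  intro f hf
  rw [← hI.radical, ← Ideal.sInf_minimalPrimes, Ideal.mem_sInf]
  intro P hP
  obtain ⟨s, hs, hsf⟩ := exists_notMem_mul_mem_pow_of_mem_symbolicPower hf hP
  exact (hP.1.1.mem_or_mem (hP.1.2 (Ideal.pow_le_self hn hsf))).resolve_left hs

theorem exists_isSMulRegular_mul_mem_pow_of_mem_symbolicPower [IsNoetherianRing S]
    (hI : I.IsRadical) {n : ℕ} {f : S} (hf : f ∈ symbolicPower I n) :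
    ∃ s, IsSMulRegular (S ⧸ I) s ∧ s * f ∈ I ^ n := by
  let Q : Ideal S := Submodule.comap (LinearMap.mulRight S f) (I ^ n)
  have not_subset : ¬(Q : Set S) ⊆ ⋃ P ∈ I.minimalPrimes, (P : Set S) := by
    intro hQ
    obtain ⟨P, hP, hQP⟩ := (Ideal.subset_union_prime_finite (f := id)
      (Ideal.finite_minimalPrimes_of_isNoetherianRing S I) ⊥ ⊥ fun P hP _ _ => hP.1.1).1 hQ
    obtain ⟨s, hs, hsf⟩ := exists_notMem_mul_mem_pow_of_mem_symbolicPower hf hP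
    exact hs (hQP hsf)
  obtain ⟨s, hsQ, hs⟩ := Set.not_subset.1 not_subset
  exact ⟨s, isSMulRegular_quotient_of_forall_notMem_minimalPrimes hI
    fun P hP hsP => hs (Set.mem_biUnion hP hsP), hsQ⟩

variable {K : Type*} [CommRing K] [Algebra K S]

theorem D_mem_smul_top_of_mem_sq {g : S} (hg : g ∈ I ^ 2) :
    D K S g ∈ I • (⊤ : Submodule S Ω[S⁄K]) := by
  rw [pow_two] at hg
  induction hg using Submodule.mul_induction_on' with
  | mem_mul_mem a ha b hb =>
    rw [Derivation.leibniz]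
    exact add_mem (Submodule.smul_mem_smul ha trivial) (Submodule.smul_mem_smul hb trivial)
  | add x _ y _ hx hy => rw [map_add]; exact add_mem hx hy

theorem D_mem_smul_top_of_mem_symbolicPower_two [IsNoetherianRing S] [Module.Flat S Ω[S⁄K]]
    (hI : I.IsRadical) {f : S} (hf : f ∈ symbolicPower I 2) :
    D K S f ∈ I • (⊤ : Submodule S Ω[S⁄K]) := by
  obtain ⟨s, hs, hsf⟩ := exists_isSMulRegular_mul_mem_pow_of_mem_symbolicPower hI hf
  have hsD := D_mem_smul_top_of_mem_sq (K := K) hsf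
  rw [Derivation.leibniz] at hsD
  have hfDs : f • D K S s ∈ I • (⊤ : Submodule S Ω[S⁄K]) :=
    Submodule.smul_mem_smul (symbolicPower_le hI two_ne_zero hf) trivial
  exact mem_of_isSMulRegular_quotient_of_smul_mem (isSMulRegular_quotient_smul_top hs)
    ((Submodule.add_mem_iff_left _ hfDs).1 hsD)

end SymbolicSquare

theorem exists_forall_pow_le_pow_succ {S : Type*} [CommSemiring S] {I J : Ideal S} (hJI : J ≤ I)
    (h : ∃ N, J ^ N ≤ I ^ (N + 1)) :
    ∃ N, 0 < N ∧ ∀ n, N ≤ n → J ^ n ≤ I ^ (n + 1) := by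
  obtain ⟨N, hN⟩ := h
  refine ⟨N + 1, N.succ_pos, fun n hn => ?_⟩
  obtain ⟨m, rfl⟩ := Nat.exists_eq_add_of_le (Nat.le_of_succ_le hn)
  calc J ^ (N + m) = J ^ N * J ^ m := pow_add J N m
    _ ≤ I ^ (N + 1) * I ^ m := Ideal.mul_mono hN (Ideal.pow_right_mono hJI m)
    _ = I ^ (N + m + 1) := by rw [← pow_add, add_right_comm]

theorem exists_pow_symbolicPower_two_le_general {K S : Type*} [Field K] [CharZero K]
    [CommRing S] [IsNoetherianRing S] [Algebra K S] [Module.Flat S Ω[S⁄K]]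
    (I : Ideal S) (hI : I.IsRadical) :
    ∃ N : ℕ, 0 < N ∧ ∀ n : ℕ, N ≤ n → (symbolicPower I 2) ^ n ≤ I ^ (n + 1) :=
  have hle : symbolicPower I 2 ≤ I := symbolicPower_le hI two_ne_zero
  exists_forall_pow_le_pow_succ hle <| exists_pow_le_pow_succ_of_D_mem_smul_top (K := K) hle
    fun _ hf => D_mem_smul_top_of_mem_symbolicPower_two hI hf

/-- Let `K` be a field of characteristic zero and `S` a smooth `K`-algebra, essentially of
finite type over `K`. Given a radical ideal `I ⊆ S`, there exists a positive integer `N`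
such that `(I^{(2)})^n ⊆ I^{n+1}` for all `n ≥ N`. -/
theorem exists_pow_symbolicPower_two_le {K S : Type u} [Field K] [CharZero K]
    [CommRing S] [Algebra K S] [Algebra.EssFiniteType K S] [Algebra.FormallySmooth K S]
    (I : Ideal S) (hI : I.IsRadical) :
    ∃ N : ℕ, 0 < N ∧ ∀ n : ℕ, N ≤ n → (symbolicPower I 2) ^ n ≤ I ^ (n + 1) := by
  have : IsNoetherianRing S := Algebra.EssFiniteType.isNoetherianRing K S
  have : Module.Projective S Ω[S⁄K] := Algebra.FormallySmooth.projective_kaehlerDifferential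
  exact exists_pow_symbolicPower_two_le_general (K := K) I hI
end
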